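/- Let G be a digraph, let x1, x2, y1, y2, y3 be pairwise distinct vertices of G, and let c_0, c_1, …, c_d be a sequence of cut vertices between x1 and y1, y2 whose entries are pairwise distinct. Then the following are equivalent: (a) there exist directed paths P1 from x1 to y1, P2 from x1 to y2, and P3 from x2 to y3 such that no vertex of G lies on all three of these paths; (b) there is a directed path from x2 to y3 in the digraph obtained from G by deleting all the vertices c_0, c_1, …, c_d. -/

import Mathlib

/-- A digraph: a finite vertex set together with a set of edges,
which are ordered pairs of distinct vertices. -/
structure Dgraph (V : Type*) where
  verts : Set V
  Edge : V → V → Prop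
  mem_of_edge : ∀ ⦃x y⦄, Edge x y → x ∈ verts ∧ y ∈ verts
  ne_of_edge : ∀ ⦃x y⦄, Edge x y → x ≠ y
  finite : verts.Finite

namespace Dgraph

variable {V : Type*}

/-- A directed path: a nonempty sequence of pairwise distinct vertices of `G`
in which each consecutive pair is joined by an edge of `G`. -/
def IsPath (G : Dgraph V) (p : List V) : Prop :=
  p ≠ [] ∧ p.Nodup ∧ p.Chain' G.Edge ∧ ∀ v ∈ p, v ∈ G.verts

/-- A directed path from `a` to `b`. -/
def PathFrom (G : Dgraph V) (p : List V) (a b : V) : Prop :=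
  G.IsPath p ∧ p.head? = some a ∧ p.getLast? = some b

/-- The internal vertices of a path (all vertices except the two endpoints). -/
def internals (p : List V) : List V := p.tail.dropLast

/-- Two paths are internally vertex-disjoint if no internal vertex of either
path lies on both paths. -/
def IntDisjoint (p q : List V) : Prop :=
  ∀ v, v ∈ internals p ∨ v ∈ internals q → ¬(v ∈ p ∧ v ∈ q)

/-- The digraph induced on `V(G) \ D`. -/
def delete (G : Dgraph V) (D : Set V) : Dgraph V where
  verts := G.verts \ D
  Edge x y := G.Edge x y ∧ x ∉ D ∧ y ∉ D
  mem_of_edge := by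
    intro x y h
    exact ⟨⟨(G.mem_of_edge h.1).1, h.2.1⟩, ⟨(G.mem_of_edge h.1).2, h.2.2⟩⟩
  ne_of_edge := by
    intro x y h
    exact G.ne_of_edge h.1
  finite := G.finite.diff

/-- `c 0, c 1, …, c k` is a sequence of cut vertices between `s` and `t1, t2`. -/
def IsCutSeq (G : Dgraph V) (s t1 t2 : V) (k : ℕ) (c : ℕ → V) : Prop :=
  c 0 = s ∧
  (∀ j < k,
    (∃ p q : List V, p ≠ q ∧ G.PathFrom p (c j) (c (j+1)) ∧ G.PathFrom q (c j) (c (j+1)) ∧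
      IntDisjoint p q) ∧
    (∀ p : List V, G.PathFrom p (c j) t1 ∨ G.PathFrom p (c j) t2 → c (j+1) ∈ p)) ∧
  ((c k = t1 ∧ t1 = t2) ∨
   (∃ p q : List V, G.PathFrom p (c k) t1 ∧ G.PathFrom q (c k) t2 ∧ IntDisjoint p q))

end Dgraph

namespace Dgraph

theorem PathFrom.split {V : Type*} {G : Dgraph V} {p : List V} {a b v : V}
    (h : G.PathFrom p a b) (hv : v ∈ p) :
    ∃ l1 l2, p = l1 ++ v :: l2 ∧ G.PathFrom (l1 ++ [v]) a v ∧ G.PathFrom (v :: l2) v b := by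
  obtain ⟨l1, l2, rfl⟩ := List.append_of_mem hv
  obtain ⟨⟨h1, h2, h3, h4⟩, h5, h6⟩ := h
  have e : l1 ++ v :: l2 = (l1 ++ [v]) ++ l2 := by simp
  refine ⟨l1, l2, rfl, ⟨⟨by simp, ?_, ?_, ?_⟩, ?_, by simp⟩, ⟨⟨by simp, ?_, ?_, ?_⟩, by simp, ?_⟩⟩
  · rw [e] at h2
    exact (List.nodup_append.1 h2).1
  · rw [e] at h3
    exact h3.left_of_append
  · intro w hw
    apply h4
    rw [e]
    exact List.mem_append_left _ hw
  · cases l1 <;> simpa using h5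
  · exact (List.nodup_append.1 h2).2.1
  · exact h3.right_of_append
  · intro w hw
    exact h4 w (List.mem_append_right _ hw)
  · rw [List.getLast?_append] at h6
    simpa using h6

theorem PathFrom.join {V : Type*} {G : Dgraph V} {v t : V} {q : List V}
    (hq : G.PathFrom q v t) : ∀ (p : List V) (a : V), G.PathFrom p a v →
    ∃ r, G.PathFrom r a t ∧ ∀ w ∈ r, w ∈ p ∨ w ∈ q := by
  intro p
  induction p with
  | nil => intro a h; exact absurd rfl h.1.1
  | cons x p ih =>
    intro a h
    obtain ⟨⟨h1, h2, h3, h4⟩, h5, h6⟩ := h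
    obtain rfl : x = a := by simpa using h5
    cases p with
    | nil =>
      obtain rfl : x = v := by simpa using h6
      exact ⟨q, hq, fun w hw => Or.inr hw⟩
    | cons y p =>
      have h3' := List.isChain_cons_cons.1 h3
      obtain ⟨r, hr, hrs⟩ := ih y ⟨⟨by simp, (List.nodup_cons.1 h2).2, h3'.2,
        fun w hw => h4 w (List.mem_cons_of_mem _ hw)⟩, by simp, by simpa using h6⟩
      by_cases hx : x ∈ r
      · obtain ⟨l1, l2, rfl, -, hs⟩ := hr.split hx
        refine ⟨_, hs, fun w hw => ?_⟩
        rcases hrs w (List.mem_append_right _ hw) with h | h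
        · exact Or.inl (List.mem_cons_of_mem _ h)
        · exact Or.inr h
      · obtain ⟨⟨r1, r2, r3, r4⟩, r5, r6⟩ := hr
        cases r with
        | nil => exact absurd rfl r1
        | cons z r =>
          obtain rfl : z = y := by simpa using r5
          refine ⟨x :: z :: r, ⟨⟨by simp, List.nodup_cons.2 ⟨hx, r2⟩,
            List.isChain_cons_cons.2 ⟨h3'.1, r3⟩, ?_⟩, by simp, by simpa using r6⟩, ?_⟩
          · intro w hw
            rcases List.mem_cons.1 hw with rfl | hw
            · exact h4 _ (by simp)
            · exact r4 w hw
          · intro w hw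
            rcases List.mem_cons.1 hw with rfl | hw
            · left; simp
            · rcases hrs w hw with h | h
              · exact Or.inl (List.mem_cons_of_mem _ h)
              · exact Or.inr h

theorem PathFrom.inter {V : Type*} {G : Dgraph V} {a b t : V} {p q : List V}
    (hp : G.PathFrom p a b) (hq : G.PathFrom q b t)
    (hb : ∀ r, G.PathFrom r a t → b ∈ r) {v : V} (hvp : v ∈ p) (hvq : v ∈ q) : v = b := by
  by_contra hne
  obtain ⟨l1, l2, e1, hs1, -⟩ := hp.split hvp
  obtain ⟨m1, m2, e2, -, hs2⟩ := hq.split hvq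
  obtain ⟨r, hr, hrs⟩ := PathFrom.join hs2 _ _ hs1
  rcases hrs b (hb r hr) with h | h
  · have hl := hp.2.2
    have hn := hp.1.2.1
    have e : p = (l1 ++ [v]) ++ l2 := by rw [e1]; simp
    rw [e] at hl hn
    have : b ∈ l2 := by
      rcases List.eq_nil_or_concat l2 with rfl | ⟨l, z, rfl⟩
      · simp at hl; exact absurd hl hne
      · rw [List.getLast?_append] at hl
        simp at hl
        simp [hl]
    exact (List.nodup_append.1 hn).2.2 b h b this rfl
  · have hl := hq.2.1
    have hn := hq.1.2.1
    rw [e2] at hl hn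
    have : b ∈ m1 := by
      cases m1 with
      | nil => simp at hl; exact absurd hl hne
      | cons z m => simp at hl; simp [hl]
    exact (List.nodup_append.1 hn).2.2 b this b h rfl

theorem PathFrom.mem_cases {V : Type*} {G : Dgraph V} {a b : V} {p : List V}
    (hp : G.PathFrom p a b) {v : V} (hv : v ∈ p) : v = a ∨ v = b ∨ v ∈ internals p := by
  obtain ⟨-, h5, h6⟩ := hp
  cases p with
  | nil => simp at hv
  | cons x p =>
    obtain rfl : x = a := by simpa using h5
    rcases List.mem_cons.1 hv with rfl | hv
    · exact Or.inl rfl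
    · right
      rcases List.eq_nil_or_concat p with rfl | ⟨l, z, rfl⟩
      · simp at hv
      · rw [List.concat_eq_append] at *
        have hz : z = b := by
          rw [← List.cons_append, List.getLast?_append] at h6
          simpa using h6
        rcases List.mem_append.1 hv with h | h
        · right; simpa [internals] using h
        · left; rw [← hz]; simpa using h

theorem IntDisjoint.cases {V : Type*} {G : Dgraph V} {a b b' : V} {p q : List V}
    (hp : G.PathFrom p a b) (hq : G.PathFrom q a b') (h : IntDisjoint p q) {v : V}
    (hvp : v ∈ p) (hvq : v ∈ q) : v = a ∨ (v = b ∧ v = b') := by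
  rcases hp.mem_cases hvp with h1 | h1 | h1
  · exact Or.inl h1
  · rcases hq.mem_cases hvq with h2 | h2 | h2
    · exact Or.inl h2
    · exact Or.inr ⟨h1, h2⟩
    · exact absurd ⟨hvp, hvq⟩ (h v (Or.inr h2))
  · exact absurd ⟨hvp, hvq⟩ (h v (Or.inl h1))

end Dgraph

/-- Let `x1, x2, y1, y2, y3` be pairwise distinct vertices and
let `c 0, …, c d` be a sequence of cut vertices between `x1` and `y1, y2` with
pairwise distinct entries.  Then a half-integral routing
`(x1 → y1, x1 → y2, x2 → y3)` (no vertex on all three paths) exists iff there is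
a directed path from `x2` to `y3` in `G − {c 0, …, c d}`. -/
theorem stmt6 {V : Type*} (G : Dgraph V) (x1 x2 y1 y2 y3 : V)
    (hdist : List.Pairwise (· ≠ ·) [x1, x2, y1, y2, y3])
    (d : ℕ) (c : ℕ → V)
    (hcut : G.IsCutSeq x1 y1 y2 d c)
    (hinj : ∀ i j, i ≤ d → j ≤ d → c i = c j → i = j) :
    (∃ P1 P2 P3 : List V, G.PathFrom P1 x1 y1 ∧ G.PathFrom P2 x1 y2 ∧
        G.PathFrom P3 x2 y3 ∧ ∀ v : V, ¬(v ∈ P1 ∧ v ∈ P2 ∧ v ∈ P3)) ↔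
    (∃ P : List V, (G.delete {v | ∃ i ≤ d, v = c i}).PathFrom P x2 y3) := by
  obtain ⟨hc0, hstep, hend⟩ := hcut
  have hy : y1 ≠ y2 := by
    simp at hdist
    tauto
  constructor
  · rintro ⟨P1, P2, P3, h1, h2, h3, hdis⟩
    have key : ∀ (t : V) (P : List V), (t = y1 ∨ t = y2) → G.PathFrom P x1 t →
        ∀ i ≤ d, c i ∈ P := by
      intro t P ht hP i
      induction i with
      | zero =>
        intro _
        rw [hc0]
        exact List.mem_of_mem_head? hP.2.1
      | succ i ih =>
        intro hi
        obtain ⟨l1, l2, e, -, hs⟩ := hP.split (ih (by omega))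
        have := (hstep i (by omega)).2 _ (by
          rcases ht with rfl | rfl
          · exact Or.inl hs
          · exact Or.inr hs)
        rw [e]
        exact List.mem_append_right _ this
    have hav : ∀ v ∈ P3, v ∉ {v | ∃ i ≤ d, v = c i} := by
      rintro v hv ⟨i, hi, rfl⟩
      exact hdis _ ⟨key y1 P1 (Or.inl rfl) h1 i hi, key y2 P2 (Or.inr rfl) h2 i hi, hv⟩
    obtain ⟨⟨g1, g2, g3, g4⟩, g5, g6⟩ := h3
    refine ⟨P3, ⟨g1, g2, ?_, fun v hv => ⟨g4 v hv, hav v hv⟩⟩, g5, g6⟩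
    clear g1 g2 g5 g6 hdis
    induction P3 with
    | nil => exact List.isChain_nil
    | cons x p ih =>
      cases p with
      | nil => exact List.isChain_singleton _
      | cons y p =>
        have g := List.isChain_cons_cons.1 g3
        exact List.isChain_cons_cons.2 ⟨⟨g.1, hav x (by simp), hav y (by simp)⟩,
          ih (fun v hv => hav v (List.mem_cons_of_mem _ hv)) g.2
            (fun v hv => g4 v (List.mem_cons_of_mem _ hv))⟩
  · rintro ⟨P, ⟨g1, g2, g3, g4⟩, g5, g6⟩
    have key : ∀ n j, j + n = d → ∃ P Q : List V, G.PathFrom P (c j) y1 ∧ G.PathFrom Q (c j) y2 ∧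
        ∀ v, v ∈ P → v ∈ Q → ∃ i ≤ d, v = c i := by
      intro n
      induction n with
      | zero =>
        intro j hj
        obtain rfl : j = d := by omega
        rcases hend with h | ⟨p, q, hp, hq, hpq⟩
        · exact absurd h.2 hy
        · refine ⟨p, q, hp, hq, fun v h1 h2 => ?_⟩
          rcases Dgraph.IntDisjoint.cases hp hq hpq h1 h2 with h | ⟨h, h'⟩
          · exact ⟨j, le_rfl, h⟩
          · exact absurd (h.symm.trans h') hy
      | succ n ih =>
        intro j hj
        obtain ⟨P', Q', hP, hQ, hPQ⟩ := ih (j + 1) (by omega)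
        obtain ⟨⟨p, q, -, hp, hq, hpq⟩, hall⟩ := hstep j (by omega)
        obtain ⟨r, hr, hrs⟩ := Dgraph.PathFrom.join hP _ _ hp
        obtain ⟨s, hs, hss⟩ := Dgraph.PathFrom.join hQ _ _ hq
        refine ⟨r, s, hr, hs, fun v h1 h2 => ?_⟩
        rcases hrs v h1 with h1 | h1 <;> rcases hss v h2 with h2 | h2
        · rcases Dgraph.IntDisjoint.cases hp hq hpq h1 h2 with h | ⟨h, -⟩
          · exact ⟨j, by omega, h⟩
          · exact ⟨j + 1, by omega, h⟩
        · exact ⟨j + 1, by omega, hp.inter hQ (fun r hr => hall r (Or.inr hr)) h1 h2⟩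
        · exact ⟨j + 1, by omega, hq.inter hP (fun r hr => hall r (Or.inl hr)) h2 h1⟩
        · exact hPQ v h1 h2
    obtain ⟨P1, P2, h1, h2, h12⟩ := key d 0 (by omega)
    rw [hc0] at h1 h2
    refine ⟨P1, P2, P, h1, h2, ⟨⟨g1, g2, List.IsChain.imp (fun _ _ h => h.1) g3,
      fun v hv => (g4 v hv).1⟩, g5, g6⟩, ?_⟩
    rintro v ⟨hv1, hv2, hv3⟩
    exact (g4 v hv3).2 (h12 v hv1 hv2)
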